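/- Let V ∈ L²(ℝ³;ℝ) be the unique function such that ∫_{ℝ³} V(x)(∫_{ℝ³} e^{−ik·x}φ(k) dk) dx = ∫_{ℝ³} v(k)φ(k) dk for every Schwartz function φ. There exists C > 0 such that for every differentiable u : ℝ³ → ℂ with ∇u ∈ L²(ℝ³) and ‖u‖_{L²} = 1, one has for almost every x ∈ ℝ³: ∫_{ℝ³} |V(x−y)|² |u(y)|² dy ≤ C ‖u‖_{H¹}^{3/2}; i.e., ‖V²∗|u|²‖_{L^∞} ≤ C‖u‖_{H¹}^{3/2}. -/

import Mathlib

open MeasureTheory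
open scoped ENNReal

noncomputable section

/-- The dispersion relation `ω(k) = √(1+|k|²)` of the massive scalar field. -/
def ω (k : EuclideanSpace ℝ (Fin 3)) : ℝ := Real.sqrt (1 + ‖k‖ ^ 2)

/-- `v(k) = −4/(ω(k)(|k|²+ω(k))) + 2/(|k|²+ω(k))²`, which is `(2π)^{3/2}` times the
Fourier transform of the effective pair potential `V` of the dressed Nelson model. -/
def vker (k : EuclideanSpace ℝ (Fin 3)) : ℝ :=
  -4 / (ω k * (‖k‖ ^ 2 + ω k)) + 2 / (‖k‖ ^ 2 + ω k) ^ 2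

/-- The square of the `H¹`-norm, `‖u‖_{H¹}² = ‖u‖_{L²}² + ‖∇u‖_{L²}²`. -/
def H1sq (u : EuclideanSpace ℝ (Fin 3) → ℂ) : ℝ :=
  (∫ x, ‖u x‖ ^ 2) + ∫ x, ‖fderiv ℝ u x‖ ^ 2

/-- The `H¹`-norm of `u`. -/
def H1norm (u : EuclideanSpace ℝ (Fin 3) → ℂ) : ℝ := Real.sqrt (H1sq u)

abbrev E3 := EuclideanSpace ℝ (Fin 3)

lemma line_bound (f f' : ℝ → ℂ) (hf : ∀ x, HasDerivAt f (f' x) x) (a : ℝ) :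
    ‖f a‖ₑ ≤ ∫⁻ t, (‖f' t‖ₑ + ‖f t‖ₑ) := by
  by_cases hfin : ∫⁻ t, (‖f' t‖ₑ + ‖f t‖ₑ) = ⊤
  · simp [hfin]
  have hcont : Continuous f := continuous_iff_continuousAt.2 fun x => (hf x).continuousAt
  have hf' : f' = deriv f := by ext x; exact ((hf x).deriv).symm
  have hm' : Measurable f' := by rw [hf']; exact measurable_deriv f
  have hi' : Integrable f' := ⟨hm'.aestronglyMeasurable,
    lt_of_le_of_lt (lintegral_mono fun t => le_self_add) (lt_top_iff_ne_top.2 hfin)⟩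
  have hi : Integrable f := ⟨hcont.aestronglyMeasurable,
    lt_of_le_of_lt (lintegral_mono fun t => le_add_self) (lt_top_iff_ne_top.2 hfin)⟩
  have ht := tendsto_zero_of_hasDerivAt_of_integrableOn_Iic (a := a) (fun x _ => hf x)
    hi'.integrableOn hi.integrableOn
  have h := integral_Iic_of_hasDerivAt_of_tendsto' (a := a) (fun x _ => hf x)
    hi'.integrableOn ht
  rw [sub_zero] at h
  rw [← h]
  calc _ ≤ ∫⁻ t in Set.Iic a, ‖f' t‖ₑ := enorm_integral_le_lintegral_enorm _
    _ ≤ ∫⁻ t, ‖f' t‖ₑ := setLIntegral_le_lintegral _ _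
    _ ≤ _ := lintegral_mono fun t => le_self_add

lemma sob_pi (w : (Fin 3 → ℝ) → ℂ) (hw : Differentiable ℝ w) (F : (Fin 3 → ℝ) → ℝ≥0∞)
    (hF : Measurable F)
    (h : ∀ x i, ‖fderiv ℝ w x (Pi.single i 1)‖ₑ + ‖w x‖ₑ ≤ F x) :
    ∫⁻ x, ‖w x‖ₑ ^ (3 / 2 : ℝ) ≤ (∫⁻ x, F x) ^ (3 / 2 : ℝ) := by
  have hp : Real.HolderConjugate (Fintype.card (Fin 3) : ℝ) (3/2) := by
    rw [Real.holderConjugate_iff]; norm_num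
  refine le_trans ?_ (lintegral_prod_lintegral_pow_le (fun _ => (volume : Measure ℝ)) hp hF)
  refine lintegral_mono fun x => ?_
  have key : ∀ i, ‖w x‖ₑ ≤ ∫⁻ t, F (Function.update x i t) := by
    intro i
    have := line_bound (fun t => w (Function.update x i t))
      (fun t => fderiv ℝ w (Function.update x i t) (Pi.single i 1))
      (fun t => (hw _).hasFDerivAt.comp_hasDerivAt t (hasDerivAt_update x i t)) (x i)
    simp only [Function.update_eq_self] at this
    exact this.trans (lintegral_mono fun t => h _ i)
  calc ‖w x‖ₑ ^ (3 / 2 : ℝ) = ∏ i : Fin 3, ‖w x‖ₑ ^ ((1:ℝ) / ((Fintype.card (Fin 3) : ℝ) - 1)) := by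
        rw [Finset.prod_const, ← ENNReal.rpow_natCast, ← ENNReal.rpow_mul]; norm_num
    _ ≤ _ := by
        gcongr with i
        · norm_num
        · exact key i

lemma sob (w : EuclideanSpace ℝ (Fin 3) → ℂ) (hw : Differentiable ℝ w)
    (F : EuclideanSpace ℝ (Fin 3) → ℝ≥0∞) (hF : Measurable F)
    (h : ∀ x i, ‖fderiv ℝ w x (EuclideanSpace.single i 1)‖ₑ + ‖w x‖ₑ ≤ F x) :
    ∫⁻ x, ‖w x‖ₑ ^ (3 / 2 : ℝ) ≤ (∫⁻ x, F x) ^ (3 / 2 : ℝ) := by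
  have mp := PiLp.volume_preserving_toLp (Fin 3)
  let e := (PiLp.continuousLinearEquiv 2 ℝ (fun _ : Fin 3 => ℝ)).symm
  have h1 := sob_pi (w ∘ e) (hw.comp e.differentiable) (F ∘ e) (hF.comp e.continuous.measurable)
    (by
      intro x i
      rw [fderiv_comp x (hw _) e.differentiableAt]
      have : fderiv ℝ e x = e := e.fderiv
      rw [this]
      exact h (e x) i)
  rw [← mp.lintegral_comp hF, ← mp.lintegral_comp (f := fun x => ‖w x‖ₑ ^ (3 / 2 : ℝ))
    (by have := hw.continuous.measurable; fun_prop)]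
  exact h1


/-- `L³` bound -/
lemma sob_u (u : E3 → ℂ) (hu : Differentiable ℝ u) :
    ∫⁻ x, ‖u x‖ₑ ^ (3 : ℝ) ≤ (∫⁻ x, (2 * ‖u x‖ₑ * ‖fderiv ℝ u x‖ₑ + ‖u x‖ₑ ^ 2)) ^ (3 / 2 : ℝ) := by
  have hm := hu.continuous.measurable
  have hm' : Measurable (fderiv ℝ u) := measurable_fderiv ℝ u
  have := sob (fun x => u x ^ 2) (hu.pow 2) _
    (show Measurable (fun x => 2 * ‖u x‖ₑ * ‖fderiv ℝ u x‖ₑ + ‖u x‖ₑ ^ 2) by fun_prop) (by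
      intro x i
      rw [fderiv_fun_pow 2 (hu x)]
      simp only [enorm_pow]
      gcongr
      simp only [smul_apply, enorm_smul]
      have h1 : ‖(EuclideanSpace.single i 1 : E3)‖ₑ = 1 := by
        rw [← ofReal_norm]; simp
      have h2 := (fderiv ℝ u x).le_opENorm (EuclideanSpace.single i 1)
      rw [h1, mul_one] at h2
      have h3 : ‖(2:ℂ)‖ₑ = 2 := by rw [← ofReal_norm]; simp
      refine mul_le_mul' (le_of_eq ?_) h2
      simp [h3])
  convert this using 3 with x
  rw [enorm_pow, ← ENNReal.rpow_natCast, ← ENNReal.rpow_mul]; norm_num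

lemma sob6 (W : E3 → ℂ) (hW : Differentiable ℝ W) (hfin : ∫⁻ x, ‖W x‖ₑ ^ (6:ℝ) ≠ ⊤)
    (G : E3 → ℝ≥0∞) (hG : Measurable G)
    (h : ∀ x i, 4 * ‖fderiv ℝ W x (EuclideanSpace.single i 1)‖ₑ + ‖W x‖ₑ ≤ G x) :
    ∫⁻ x, ‖W x‖ₑ ^ (6:ℝ) ≤ (∫⁻ x, G x ^ (2:ℝ)) ^ (3:ℝ) := by
  have hm := hW.continuous.measurable
  have h1 := sob (fun x => W x ^ 4) (hW.pow 4) (fun x => ‖W x‖ₑ ^ 3 * G x) (by fun_prop) (by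
      intro x i
      refine le_trans ?_ (mul_le_mul_right (h x i) _)
      rw [fderiv_fun_pow 4 (hW x)]
      simp only [enorm_pow, smul_apply, enorm_smul]
      refine le_of_eq ?_
      have : ‖(4:ℂ)‖ₑ = 4 := by rw [← ofReal_norm]; simp
      simp [this]
      ring)
  have h2 := ENNReal.lintegral_mul_le_Lp_mul_Lq volume (p := 2) (q := 2)
    (by rw [Real.holderConjugate_iff]; norm_num)
    (f := fun x => ‖W x‖ₑ ^ 3) (g := G) (by fun_prop) (by fun_prop)
  have e1 : ∀ x, ‖W x ^ 4‖ₑ ^ (3/2:ℝ) = ‖W x‖ₑ ^ (6:ℝ) := by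
    intro x
    rw [enorm_pow, ← ENNReal.rpow_natCast, ← ENNReal.rpow_mul]; norm_num
  have e2 : ∀ x, (‖W x‖ₑ ^ 3) ^ (2:ℝ) = ‖W x‖ₑ ^ (6:ℝ) := by
    intro x
    rw [← ENNReal.rpow_natCast, ← ENNReal.rpow_mul]; norm_num
  simp only [e1] at h1
  simp only [e2, Pi.mul_apply] at h2
  set A := ∫⁻ x, ‖W x‖ₑ ^ (6:ℝ)
  set B := ∫⁻ x, G x ^ (2:ℝ)
  have h3 : A ≤ A ^ (3/4:ℝ) * B ^ (3/4:ℝ) := by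
    refine h1.trans ((ENNReal.rpow_le_rpow h2 (by norm_num)).trans ?_)
    rw [ENNReal.mul_rpow_of_nonneg _ _ (by norm_num), ← ENNReal.rpow_mul, ← ENNReal.rpow_mul]
    norm_num
  by_cases hA0 : A = 0
  · simp [hA0]
  have h4 : A = A ^ (3/4:ℝ) * A ^ (1/4:ℝ) := by
    rw [← ENNReal.rpow_add _ _ hA0 hfin]; norm_num
  have h5 : A ^ (1/4:ℝ) ≤ B ^ (3/4:ℝ) := by
    have hne : A ^ (3/4:ℝ) ≠ 0 := by simp [hA0, hfin]
    have hnt : A ^ (3/4:ℝ) ≠ ⊤ := by simp [hA0, hfin]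
    rw [← ENNReal.mul_le_mul_iff_right hne hnt, ← h4]
    exact h3
  have h6 := ENNReal.rpow_le_rpow h5 (show (0:ℝ) ≤ 4 by norm_num)
  rw [← ENNReal.rpow_mul, ← ENNReal.rpow_mul] at h6
  norm_num at h6
  exact_mod_cast h6
open FourierTransform SchwartzMap LineDeriv

lemma omega_sq (k : E3) : ω k ^ 2 = 1 + ‖k‖ ^ 2 := Real.sq_sqrt (by positivity)
lemma omega_ge (k : E3) : 1 ≤ ω k := by
  rw [ω, Real.one_le_sqrt]; nlinarith [sq_nonneg ‖k‖]
lemma omega_norm (k : E3) : ‖k‖ ≤ ω k := by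
  apply Real.le_sqrt_of_sq_le; linarith
lemma omega_smooth : ContDiff ℝ ((⊤ : ℕ∞) : WithTop ℕ∞) ω := by
  unfold ω
  exact (contDiff_const.add (contDiff_norm_sq ℝ)).sqrt (fun x => by positivity)
lemma vker_smooth : ContDiff ℝ ((⊤ : ℕ∞) : WithTop ℕ∞) vker := by
  have h := omega_smooth
  have hn : ContDiff ℝ ((⊤ : ℕ∞) : WithTop ℕ∞) (fun k : E3 => ‖k‖ ^ 2) := contDiff_norm_sq ℝ
  have h1 : ∀ k : E3, 0 < ω k := fun k => lt_of_lt_of_le one_pos (omega_ge k)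
  have h2 : ∀ k : E3, 0 < ‖k‖ ^ 2 + ω k := fun k => by have := h1 k; positivity
  unfold vker
  refine ContDiff.add (ContDiff.div contDiff_const (h.mul (hn.add h)) ?_)
    (ContDiff.div contDiff_const ((hn.add h).pow 2) ?_)
  · intro k; exact (mul_pos (h1 k) (h2 k)).ne'
  · intro k; exact (pow_pos (h2 k) 2).ne'

lemma gker_bound (k : E3) : (ω k * |vker k|) ^ 2 ≤ 36 * (1 + ‖k‖ ^ 2) ^ (-(4:ℝ) / 2) := by
  have h1 := omega_ge k
  have h0 : 0 < ω k := by linarith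
  have hs := omega_sq k
  have hd : ω k ^ 2 ≤ ‖k‖ ^ 2 + ω k := by linarith
  have hv : |vker k| ≤ 6 / ω k ^ 3 := by
    unfold vker
    refine (abs_add_le _ _).trans ?_
    have a1 : |-4 / (ω k * (‖k‖ ^ 2 + ω k))| ≤ 4 / ω k ^ 3 := by
      rw [abs_div, abs_of_pos (show 0 < ω k * (‖k‖ ^ 2 + ω k) by positivity)]
      norm_num
      gcongr
      nlinarith
    have a2 : |2 / (‖k‖ ^ 2 + ω k) ^ 2| ≤ 2 / ω k ^ 3 := by
      rw [abs_of_nonneg (by positivity)]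
      gcongr
      calc ω k ^ 3 ≤ ω k ^ 4 := pow_le_pow_right₀ h1 (by norm_num)
        _ = (ω k ^ 2) ^ 2 := by ring
        _ ≤ _ := by gcongr
    calc _ ≤ 4 / ω k ^ 3 + 2 / ω k ^ 3 := add_le_add a1 a2
      _ = _ := by ring
  have : (1 + ‖k‖ ^ 2) ^ (-(4:ℝ) / 2) = (ω k ^ 4)⁻¹ := by
    rw [← hs, show (-(4:ℝ)/2) = -(2:ℝ) by norm_num, Real.rpow_neg (by positivity)]
    norm_cast
    rw [← pow_mul]
  rw [this]
  calc (ω k * |vker k|) ^ 2 ≤ (ω k * (6 / ω k ^ 3)) ^ 2 := by gcongr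
    _ = _ := by field_simp; norm_num

lemma gker_mem : MemLp (fun k : E3 => ω k * |vker k|) 2 volume := by
  have hc : Continuous (fun k : E3 => ω k * |vker k|) :=
    omega_smooth.continuous.mul vker_smooth.continuous.abs
  rw [memLp_two_iff_integrable_sq hc.aestronglyMeasurable]
  have : Integrable (fun k : E3 => 36 * (1 + ‖k‖ ^ 2) ^ (-(4:ℝ) / 2)) :=
    (integrable_rpow_neg_one_add_norm_sq (by simp; norm_num)).const_mul _
  refine this.mono' (hc.pow 2).aestronglyMeasurable (Filter.Eventually.of_forall fun k => ?_)
  rw [Real.norm_of_nonneg (by positivity)]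
  exact gker_bound k

def bmp (n : ℕ) : ContDiffBump (0 : E3) := ⟨n + 1, n + 2, by positivity, by linarith⟩

def S (n : ℕ) : 𝓢(E3, ℂ) :=
  HasCompactSupport.toSchwartzMap (f := fun k => ((bmp n k * vker k : ℝ) : ℂ))
    ((bmp n).hasCompactSupport.mul_right.comp_left (g := fun x : ℝ => (x : ℂ)) (by simp))
    (Complex.ofRealCLM.contDiff.comp ((bmp n).contDiff.mul vker_smooth))

lemma S_apply (n : ℕ) (k : E3) : S n k = ((bmp n k * vker k : ℝ) : ℂ) := rfl

lemma S_norm (n : ℕ) (k : E3) : ‖S n k‖ ≤ |vker k| := by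
  rw [S_apply, Complex.norm_real, norm_mul, Real.norm_of_nonneg (bmp n).nonneg]
  exact mul_le_of_le_one_left (norm_nonneg _) (bmp n).le_one

lemma S_norm_le (n : ℕ) (k : E3) : ‖S n k‖ ≤ ‖ω k * |vker k|‖ := by
  have := omega_ge k
  rw [norm_mul, Real.norm_of_nonneg (by linarith : 0 ≤ ω k), Real.norm_of_nonneg (abs_nonneg _)]
  exact (S_norm n k).trans (le_mul_of_one_le_left (abs_nonneg _) this)

lemma eLpNorm_fourierInv (f : 𝓢(E3, ℂ)) :
    eLpNorm (𝓕⁻ f : 𝓢(E3, ℂ)) 2 volume = eLpNorm f 2 volume := by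
  have h := norm_fourier_toL2_eq (𝓕⁻ f)
  rw [fourier_fourierInv_eq, SchwartzMap.norm_toLp, SchwartzMap.norm_toLp] at h
  have h1 : eLpNorm f 2 volume ≠ ⊤ := (SchwartzMap.memLp f 2 volume).eLpNorm_ne_top
  have h2 : eLpNorm (𝓕⁻ f : 𝓢(E3, ℂ)) 2 volume ≠ ⊤ := 
    (SchwartzMap.memLp (𝓕⁻ f : 𝓢(E3, ℂ)) 2 volume).eLpNorm_ne_top
  rw [← ENNReal.ofReal_toReal h1, ← ENNReal.ofReal_toReal h2, h]

lemma W_bound (n : ℕ) : eLpNorm (𝓕⁻ (S n) : 𝓢(E3, ℂ)) 2 volume ≤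
    eLpNorm (fun k : E3 => ω k * |vker k|) 2 volume := by
  rw [eLpNorm_fourierInv]
  exact eLpNorm_mono (S_norm_le n)

lemma dW_bound (n : ℕ) (i : Fin 3) :
    eLpNorm (fun x => fderiv ℝ (𝓕⁻ (S n) : 𝓢(E3, ℂ)) x (EuclideanSpace.single i 1)) 2 volume ≤
    ENNReal.ofReal (2 * Real.pi) * eLpNorm (fun k : E3 => ω k * |vker k|) 2 volume := by
  have h := lineDerivOp_fourierInv_eq (S n) (EuclideanSpace.single i (1:ℝ))
  have h2 : (fun x => fderiv ℝ (𝓕⁻ (S n) : 𝓢(E3, ℂ)) x (EuclideanSpace.single i 1)) =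
    (∂_{(EuclideanSpace.single i (1:ℝ) : E3)} (𝓕⁻ (S n)) : 𝓢(E3, ℂ)) := by
    ext x; simp [SchwartzMap.lineDerivOp_apply_eq_fderiv]
  rw [h2, h, eLpNorm_fourierInv]
  have ht : (inner ℝ · (EuclideanSpace.single i (1:ℝ)) : E3 → ℝ).HasTemperateGrowth := by fun_prop
  refine eLpNorm_le_mul_eLpNorm_of_ae_le_mul (Filter.Eventually.of_forall fun k => ?_) 2
  rw [smul_apply, smulLeftCLM_apply_apply ht]
  have h1 := omega_norm k
  have h3 : ‖inner ℝ k (EuclideanSpace.single i (1:ℝ))‖ ≤ ‖k‖ := by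
    refine (norm_inner_le_norm _ _).trans ?_; simp
  have h0 := omega_ge k
  rw [norm_smul, norm_smul, norm_mul (ω k), Real.norm_of_nonneg (by linarith : 0 ≤ ω k),
    Real.norm_of_nonneg (abs_nonneg _)]
  have h4 := S_norm n k
  have h5 : ‖(2 * Real.pi * Complex.I : ℂ)‖ = 2 * Real.pi := by
    simp [abs_of_pos Real.pi_pos]
  rw [h5]
  gcongr
  exact h3.trans h1
lemma W6 : ∃ K : ℝ≥0∞, K ≠ ⊤ ∧ ∀ n, eLpNorm (𝓕⁻ (S n) : 𝓢(E3, ℂ)) 6 volume ≤ K := by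
  set N := eLpNorm (fun k : E3 => ω k * |vker k|) 2 volume with hN
  have hNt : N ≠ ⊤ := gker_mem.eLpNorm_ne_top
  set M : ℝ≥0∞ := ENNReal.ofReal (2 * Real.pi) * N
  set L : ℝ≥0∞ := 4 * (M + M + M) + N
  have hLt : L ≠ ⊤ := by finiteness
  refine ⟨((L ^ (2:ℝ)) ^ (3:ℝ)) ^ (1/6:ℝ), by finiteness, fun n => ?_⟩
  have hW6 : eLpNorm (𝓕⁻ (S n) : 𝓢(E3, ℂ)) 6 volume ≠ ⊤ :=
    (SchwartzMap.memLp (𝓕⁻ (S n) : 𝓢(E3, ℂ)) 6 volume).eLpNorm_ne_top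
  set W : 𝓢(E3, ℂ) := 𝓕⁻ (S n) with hWdef
  have hd : Differentiable ℝ W := W.differentiable
  let D : Fin 3 → E3 → ℂ := fun i x => fderiv ℝ W x (EuclideanSpace.single i 1)
  have hDm : ∀ i, Measurable (D i) := fun i => measurable_fderiv_apply_const ℝ W _
  have hWm : Measurable W := W.continuous.measurable
  let G : E3 → ℝ≥0∞ := fun x => 4 * (‖D 0 x‖ₑ + ‖D 1 x‖ₑ + ‖D 2 x‖ₑ) + ‖W x‖ₑ
  have hG : Measurable G := by
    have := hDm 0; have := hDm 1; have := hDm 2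
    fun_prop
  have hG2 : eLpNorm G 2 volume ≤ L := by
    have hb : ∀ i, eLpNorm (fun x => ‖D i x‖ₑ) 2 volume ≤ M := fun i => by
      rw [eLpNorm_enorm]; exact dW_bound n i
    have hw : eLpNorm (fun x => ‖W x‖ₑ) 2 volume ≤ N := by
      rw [eLpNorm_enorm]; exact W_bound n
    have hms : ∀ i, AEStronglyMeasurable (fun x => ‖D i x‖ₑ) volume :=
      fun i => (hDm i).enorm.aestronglyMeasurable
    have h01 := eLpNorm_add_le (hms 0) (hms 1) (p := 2) (by norm_num)
    have h012 := eLpNorm_add_le ((hms 0).add (hms 1)) (hms 2) (p := 2) (by norm_num)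
    let Q : E3 → ℝ≥0∞ := fun x => ‖D 0 x‖ₑ + ‖D 1 x‖ₑ + ‖D 2 x‖ₑ
    have hQm : Measurable Q := by
      have := hDm 0; have := hDm 1; have := hDm 2
      fun_prop
    have hQ : eLpNorm Q 2 volume ≤ M + M + M :=
      h012.trans (add_le_add (h01.trans (add_le_add (hb 0) (hb 1))) (hb 2))
    have h4 : eLpNorm (fun x => 4 * Q x) 2 volume ≤ 4 * (M + M + M) := by
      rw [eLpNorm_eq_lintegral_rpow_enorm_toReal (by norm_num) (by norm_num)] at hQ ⊢
      simp only [enorm_eq_self, ENNReal.toReal_ofNat] at hQ ⊢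
      simp_rw [ENNReal.mul_rpow_of_nonneg _ _ (show (0:ℝ) ≤ 2 by norm_num)]
      rw [lintegral_const_mul _ (by fun_prop), ENNReal.mul_rpow_of_nonneg _ _ (by norm_num),
        ← ENNReal.rpow_mul]
      norm_num
      norm_num at hQ
      gcongr
    exact (eLpNorm_add_le (f := fun x => 4 * Q x) (g := fun x => ‖W x‖ₑ)
      (hQm.const_mul 4).aestronglyMeasurable (by fun_prop) (by norm_num)).trans (add_le_add h4 hw)
  have h1 := eLpNorm_eq_lintegral_rpow_enorm_toReal (f := W) (p := 6) (μ := volume)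
    (by norm_num) (by norm_num)
  have h2 := eLpNorm_eq_lintegral_rpow_enorm_toReal (f := G) (p := 2) (μ := volume)
    (by norm_num) (by norm_num)
  simp only [enorm_eq_self, ENNReal.toReal_ofNat] at h1 h2
  have hfin : ∫⁻ x, ‖W x‖ₑ ^ (6:ℝ) ≠ ⊤ := by
    intro h
    rw [h1, h] at hW6
    norm_num at hW6
  have hs := sob6 W hd hfin G hG (by
    intro x i
    simp only [G]
    gcongr
    fin_cases i
    · exact le_self_add.trans le_self_add
    · exact le_add_self.trans le_self_add
    · exact le_add_self)
  have h3 : ∫⁻ x, G x ^ (2:ℝ) ≤ L ^ (2:ℝ) := by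
    have : ∫⁻ x, G x ^ (2:ℝ) = (eLpNorm G 2 volume) ^ (2:ℝ) := by
      rw [h2, ← ENNReal.rpow_mul]; norm_num
    rw [this]; gcongr
  rw [h1]
  gcongr
  exact hs.trans (by gcongr)

lemma vker_mem : MemLp (fun k : E3 => (vker k : ℂ)) 2 volume := by
  refine gker_mem.mono (Complex.continuous_ofReal.comp vker_smooth.continuous).aestronglyMeasurable
    (Filter.Eventually.of_forall fun k => ?_)
  have := omega_ge k
  rw [norm_mul, Real.norm_of_nonneg (by linarith : 0 ≤ ω k), Real.norm_of_nonneg (abs_nonneg _),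
    Complex.norm_real]
  exact (le_mul_of_one_le_left (abs_nonneg _) this)

lemma S_eventually (k : E3) : ∀ᶠ n in Filter.atTop, S n k = (vker k : ℂ) := by
  obtain ⟨m, hm⟩ := exists_nat_ge ‖k‖
  filter_upwards [Filter.eventually_ge_atTop m] with n hn
  rw [S_apply, (bmp n).one_of_mem_closedBall, one_mul]
  simp only [Metric.mem_closedBall, dist_zero_right, bmp]
  have : (m:ℝ) ≤ n := by exact_mod_cast hn
  linarith

lemma S_tendsto : Filter.Tendsto (fun n => (S n).toLp 2 volume) Filter.atTop
    (nhds (vker_mem.toLp _)) := by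
  rw [Lp.tendsto_Lp_iff_tendsto_eLpNorm']
  have e : ∀ n, eLpNorm (((S n).toLp 2 volume : E3 → ℂ) - (vker_mem.toLp _ : E3 → ℂ)) 2 volume
      = (∫⁻ k, ‖S n k - (vker k : ℂ)‖ₑ ^ (2:ℝ)) ^ (1/2:ℝ) := by
    intro n
    rw [eLpNorm_congr_ae (((S n).coeFn_toLp 2 volume).sub vker_mem.coeFn_toLp),
      eLpNorm_eq_lintegral_rpow_enorm_toReal (by norm_num) (by norm_num)]
    simp
  simp_rw [e]
  have hv : Measurable vker := vker_smooth.continuous.measurable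
  have hb := vker_mem.eLpNorm_ne_top
  rw [eLpNorm_eq_lintegral_rpow_enorm_toReal (by norm_num) (by norm_num)] at hb
  have hlim : Filter.Tendsto (fun n => ∫⁻ k, ‖S n k - (vker k : ℂ)‖ₑ ^ (2:ℝ)) Filter.atTop
      (nhds (∫⁻ k : E3, 0)) := by
    refine tendsto_lintegral_of_dominated_convergence (fun k => 4 * ‖(vker k : ℂ)‖ₑ ^ (2:ℝ)) ?_ ?_ ?_ ?_
    · intro n
      have := (S n).continuous.measurable
      fun_prop
    · intro n
      refine Filter.Eventually.of_forall fun k => ?_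
      have h1 : ‖S n k - (vker k : ℂ)‖ₑ ≤ 2 * ‖(vker k : ℂ)‖ₑ := by
        refine (enorm_sub_le).trans ?_
        rw [two_mul]
        gcongr
        rw [enorm_le_iff_norm_le, Complex.norm_real]
        exact S_norm n k
      calc _ ≤ (2 * ‖(vker k : ℂ)‖ₑ) ^ (2:ℝ) := ENNReal.rpow_le_rpow h1 (by norm_num)
        _ = _ := by
          rw [ENNReal.mul_rpow_of_nonneg _ _ (by norm_num)]; norm_num
    · rw [lintegral_const_mul _ (by fun_prop)]
      refine ENNReal.mul_ne_top (by norm_num) ?_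
      intro h
      simp at hb h
      exact hb h
    · refine Filter.Eventually.of_forall fun k => ?_
      refine tendsto_const_nhds.congr' ?_
      filter_upwards [S_eventually k] with n hn
      simp [hn]
  have := hlim.ennrpow_const (1/2:ℝ)
  simpa using this

/-- The inverse Fourier transform of `v` is in `L⁶`. -/
lemma W_mem6 : MemLp (𝓕⁻ (vker_mem.toLp _) : Lp ℂ 2 (volume : Measure E3)) 6 volume := by
  obtain ⟨K, hK, hb⟩ := W6
  have h1 : Filter.Tendsto (fun n => (𝓕⁻ (S n)).toLp 2 volume) Filter.atTop
      (nhds (𝓕⁻ (vker_mem.toLp _) : Lp ℂ 2 (volume : Measure E3))) := by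
    have := ((Lp.fourierTransformₗᵢ E3 ℂ).symm.continuous.tendsto _).comp S_tendsto
    refine this.congr fun n => ?_
    exact SchwartzMap.toLp_fourierInv_eq (S n)
  obtain ⟨φ, -, hφ⟩ := (tendstoInMeasure_of_tendsto_Lp h1).exists_seq_tendsto_ae
  refine ⟨Lp.aestronglyMeasurable _, ?_⟩
  refine lt_of_le_of_lt (Lp.eLpNorm_lim_le_liminf_eLpNorm
    (fun n => Lp.aestronglyMeasurable _) _ hφ) ?_
  refine lt_of_le_of_lt ?_ (lt_top_iff_ne_top.2 hK)
  refine Filter.liminf_le_of_le (by isBoundedDefault) fun b hbb => ?_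
  obtain ⟨n, hn⟩ := hbb.exists
  refine hn.trans ?_
  rw [eLpNorm_congr_ae (SchwartzMap.coeFn_toLp (𝓕⁻ (S (φ n))) 2 volume)]
  exact hb _

lemma V_mem6 (V : E3 → ℝ) (hV2 : MemLp V 2 volume)
    (hVFourier : ∀ φ : SchwartzMap E3 ℂ,
      (∫ x, ((V x : ℝ) : ℂ) *
          ∫ k, Complex.exp (-(Complex.I * ((inner ℝ k x : ℝ) : ℂ))) * φ k) =
        ∫ k, ((vker k : ℝ) : ℂ) * φ k) : MemLp V 6 volume := by
  have hpi : (2 * Real.pi) ≠ 0 := by positivity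
  have hscale : ∀ (r : ℝ) (_ : r ≠ 0) (p : ℝ≥0∞) (f : E3 → ℂ), MemLp f p volume →
      MemLp (fun x => f (r • x)) p volume := by
    intro r hr p f hf
    refine MemLp.comp_of_map (f := fun x : E3 => r • x) ?_ (by fun_prop)
    rw [Measure.map_addHaar_smul _ hr]
    exact hf.smul_measure ENNReal.ofReal_ne_top
  let c : ℝ := (2 * Real.pi) ^ 3
  let U : E3 → ℂ := fun y => (c : ℂ) * (V ((2 * Real.pi) • y) : ℂ)
  have hU2 : MemLp U 2 volume :=
    (hscale _ hpi 2 (fun x => (V x : ℂ)) hV2.ofReal).const_mul (c : ℂ)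
  have hUW : hU2.toLp U = (𝓕⁻ (vker_mem.toLp _) : Lp ℂ 2 (volume : Measure E3)) := by
    have hinj : Function.Injective (Lp.toTemperedDistributionCLM ℂ (volume : Measure E3) 2) :=
      LinearMap.ker_eq_bot.1 Lp.ker_toTemperedDistributionCLM_eq_bot
    apply hinj
    rw [Lp.toTemperedDistributionCLM_apply, Lp.toTemperedDistributionCLM_apply,
      ← Lp.fourierInv_toTemperedDistribution_eq]
    ext ψ
    rw [TemperedDistribution.fourierInv_apply, Lp.toTemperedDistribution_apply,
      Lp.toTemperedDistribution_apply]
    have hφ := hVFourier (𝓕⁻ ψ)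
    have e1 : ∫ k, (𝓕⁻ ψ : 𝓢(E3, ℂ)) k • (vker_mem.toLp _ : E3 → ℂ) k =
        ∫ k, ((vker k : ℝ) : ℂ) * (𝓕⁻ ψ : 𝓢(E3, ℂ)) k := by
      refine integral_congr_ae ?_
      filter_upwards [vker_mem.coeFn_toLp] with k hk
      rw [hk, smul_eq_mul, mul_comm]
    have e2 : ∫ y, ψ y • (hU2.toLp U : E3 → ℂ) y = ∫ y, ψ y * U y := by
      refine integral_congr_ae ?_
      filter_upwards [hU2.coeFn_toLp] with k hk
      rw [hk, smul_eq_mul]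
    rw [e1, e2, ← hφ]
    have e3 : ∀ y : E3, (∫ k, Complex.exp (-(Complex.I * ((inner ℝ k ((2 * Real.pi) • y) : ℝ) : ℂ)))
        * (𝓕⁻ ψ : 𝓢(E3, ℂ)) k) = ψ y := by
      intro y
      have h1 : (𝓕 (𝓕⁻ ψ) : 𝓢(E3, ℂ)) y = ψ y := by rw [fourier_fourierInv_eq]
      rw [← h1, SchwartzMap.fourier_coe, Real.fourier_eq']
      refine integral_congr_ae (Filter.Eventually.of_forall fun k => ?_)
      simp only [smul_eq_mul, inner_smul_right]
      congr 2
      push_cast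
      ring
    have e4 := Measure.integral_comp_smul (volume : Measure E3) (fun x => ((V x : ℝ) : ℂ) *
          ∫ k, Complex.exp (-(Complex.I * ((inner ℝ k x : ℝ) : ℂ))) * (𝓕⁻ ψ : 𝓢(E3, ℂ)) k)
          (2 * Real.pi)
    simp only [e3] at e4
    have hc : (c : ℂ) ≠ 0 := by
      have : c ≠ 0 := by positivity
      exact_mod_cast this
    have e5 : ∫ y, ψ y * U y = (c : ℂ) * ∫ y, (V ((2 * Real.pi) • y) : ℂ) * ψ y := by
      rw [← integral_const_mul]
      congr 1; ext y; simp only [U]; ring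
    rw [e5, e4]
    rw [abs_of_pos (by positivity)]
    have : Module.finrank ℝ E3 = 3 := by simp
    rw [this, Complex.real_smul, ← mul_assoc]
    have : (c : ℂ) * (((((2 * Real.pi) ^ 3)⁻¹ : ℝ)) : ℂ) = 1 := by
      rw [Complex.ofReal_inv]; exact mul_inv_cancel₀ hc
    rw [this, one_mul]
  have hU6 : MemLp U 6 volume := by
    have h := W_mem6
    rw [← hUW] at h
    exact (memLp_congr_ae hU2.coeFn_toLp).1 h
  have h6 := (hscale (2 * Real.pi)⁻¹ (inv_ne_zero hpi) 6 U hU6).const_mul ((c : ℂ)⁻¹)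
  have : (fun x => (c : ℂ)⁻¹ * U ((2 * Real.pi)⁻¹ • x)) = fun x => (V x : ℂ) := by
    ext x
    have hc : (c : ℂ) ≠ 0 := by
      have : c ≠ 0 := by positivity
      exact_mod_cast this
    simp only [U]
    rw [smul_smul, mul_inv_cancel₀ hpi, one_smul, inv_mul_cancel_left₀ hc]
  rw [this] at h6
  exact h6.re

lemma L2_lintegral {F : Type*} [NormedAddCommGroup F] (f : E3 → F) (hf : MemLp f 2 volume) :
    ∫⁻ x, ‖f x‖ₑ ^ (2:ℝ) = ENNReal.ofReal (∫ x, ‖f x‖ ^ 2) := by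
  rw [ofReal_integral_eq_lintegral_ofReal ((memLp_two_iff_integrable_sq_norm hf.1).1 hf)
    (Filter.Eventually.of_forall fun x => by positivity)]
  congr 1; ext x
  rw [← ofReal_norm, ENNReal.ofReal_rpow_of_nonneg (norm_nonneg _) (by norm_num)]
  norm_num

lemma conv_bound (V : E3 → ℝ) (hV : AEMeasurable V volume) (u : E3 → ℂ) (hu : Differentiable ℝ u)
    (hu2 : MemLp u 2 volume) (hdu : MemLp (fun x => fderiv ℝ u x) 2 volume)
    (hn : (∫ x, ‖u x‖ ^ 2) = 1) (x : E3) :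
    ∫⁻ y, ENNReal.ofReal (|V (x - y)| ^ 2 * ‖u y‖ ^ 2) ≤
      (∫⁻ y, ‖V y‖ₑ ^ (6:ℝ)) ^ (1/3:ℝ) * ENNReal.ofReal (3 * H1norm u) := by
  have hm := hu.continuous.measurable
  have hVx : AEMeasurable (fun y => V (x - y)) volume :=
    hV.comp_quasiMeasurePreserving (quasiMeasurePreserving_sub_left volume x)
  have e0 : ∀ y, ENNReal.ofReal (|V (x - y)| ^ 2 * ‖u y‖ ^ 2) = ‖V (x - y)‖ₑ ^ 2 * ‖u y‖ₑ ^ 2 := by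
    intro y
    rw [ENNReal.ofReal_mul (by positivity), ENNReal.ofReal_pow (by positivity),
      ENNReal.ofReal_pow (by positivity), ofReal_norm, ← Real.norm_eq_abs, ofReal_norm]
  simp_rw [e0]
  have h1 := ENNReal.lintegral_mul_le_Lp_mul_Lq volume (p := 3) (q := 3/2)
    (by rw [Real.holderConjugate_iff]; norm_num)
    (f := fun y => ‖V (x - y)‖ₑ ^ 2) (g := fun y => ‖u y‖ₑ ^ 2) (hVx.enorm.pow_const 2) (by fun_prop)
  have e1 : ∀ y, (‖V (x - y)‖ₑ ^ 2) ^ (3:ℝ) = ‖V (x - y)‖ₑ ^ (6:ℝ) := by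
    intro y
    rw [← ENNReal.rpow_natCast, ← ENNReal.rpow_mul]; norm_num
  have e2 : ∀ y, (‖u y‖ₑ ^ 2) ^ (3/2:ℝ) = ‖u y‖ₑ ^ (3:ℝ) := by
    intro y
    rw [← ENNReal.rpow_natCast, ← ENNReal.rpow_mul]; norm_num
  simp only [e1, e2, Pi.mul_apply] at h1
  rw [lintegral_sub_left_eq_self (fun y => ‖V y‖ₑ ^ (6:ℝ)) x] at h1
  refine h1.trans (mul_le_mul_right ?_ _)
  have hs := ENNReal.rpow_le_rpow (sob_u u hu) (show (0:ℝ) ≤ 1 / (3/2) by norm_num)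
  rw [← ENNReal.rpow_mul, show (3/2:ℝ) * (1/(3/2)) = 1 by norm_num, ENNReal.rpow_one] at hs
  refine hs.trans ?_
  have hm' : Measurable (fderiv ℝ u) := measurable_fderiv ℝ u
  rw [lintegral_add_right _ (by fun_prop)]
  have h2 := ENNReal.lintegral_mul_le_Lp_mul_Lq volume (p := 2) (q := 2)
    (by rw [Real.holderConjugate_iff]; norm_num)
    (f := fun y => ‖u y‖ₑ) (g := fun y => ‖fderiv ℝ u y‖ₑ) (by fun_prop) (by fun_prop)
  simp only [Pi.mul_apply] at h2
  have hL := L2_lintegral u hu2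
  rw [L2_lintegral _ hdu, hL, hn] at h2
  have hL' : ∫⁻ y, ‖u y‖ₑ ^ 2 = 1 := by
    rw [hn] at hL
    simpa using hL
  rw [hL']
  simp_rw [mul_assoc]
  rw [lintegral_const_mul _ (by fun_prop)]
  set d := ∫ x, ‖fderiv ℝ u x‖ ^ 2 with hd
  have hd0 : 0 ≤ d := integral_nonneg fun x => by positivity
  have hH : H1norm u = Real.sqrt (1 + d) := by rw [H1norm, H1sq, hn]
  have h3 : Real.sqrt d ≤ H1norm u := by rw [hH]; exact Real.sqrt_le_sqrt (by linarith)
  have h4 : 1 ≤ H1norm u := by rw [hH, Real.one_le_sqrt]; linarith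
  rw [ENNReal.ofReal_one, ENNReal.one_rpow, one_mul, ENNReal.ofReal_rpow_of_nonneg hd0 (by norm_num),
    ← Real.sqrt_eq_rpow] at h2
  calc _ ≤ 2 * ENNReal.ofReal (Real.sqrt d) + 1 := by gcongr
    _ = ENNReal.ofReal (2 * Real.sqrt d + 1) := by
      rw [ENNReal.ofReal_add (by positivity) (by norm_num), ENNReal.ofReal_mul (by norm_num)]
      simp
    _ ≤ _ := ENNReal.ofReal_le_ofReal (by linarith)

/-- Let `V ∈ L²(ℝ³;ℝ)` have unnormalized Fourier transform `v`. There is `C > 0` such that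
for every differentiable `u` with `∇u ∈ L²` and `‖u‖_{L²} = 1`, for a.e. `x`,
`∫ |V(x−y)|² |u(y)|² dy ≤ C ‖u‖_{H¹}^{3/2}`, i.e. `‖V²∗|u|²‖_{L^∞} ≤ C‖u‖_{H¹}^{3/2}`. -/
theorem Vsq_convolution_bound (V : EuclideanSpace ℝ (Fin 3) → ℝ) (hV2 : MemLp V 2 volume)
    (hVFourier : ∀ φ : SchwartzMap (EuclideanSpace ℝ (Fin 3)) ℂ,
      (∫ x, ((V x : ℝ) : ℂ) *
          ∫ k, Complex.exp (-(Complex.I * ((inner ℝ k x : ℝ) : ℂ))) * φ k) =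
        ∫ k, ((vker k : ℝ) : ℂ) * φ k) :
    ∃ C > 0, ∀ u : EuclideanSpace ℝ (Fin 3) → ℂ,
      Differentiable ℝ u → MemLp u 2 volume →
      MemLp (fun x => fderiv ℝ u x) 2 volume →
      (∫ x, ‖u x‖ ^ 2) = 1 →
      ∀ᵐ x : EuclideanSpace ℝ (Fin 3),
        ∫⁻ y, ENNReal.ofReal (|V (x - y)| ^ 2 * ‖u y‖ ^ 2) ≤
          ENNReal.ofReal (C * H1norm u ^ (3 / 2 : ℝ)) := by
  have hV6 := V_mem6 V hV2 hVFourier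
  have hA : (∫⁻ y, ‖V y‖ₑ ^ (6:ℝ)) ^ (1/3:ℝ) ≠ ⊤ := by
    have h := hV6.eLpNorm_ne_top
    rw [eLpNorm_eq_lintegral_rpow_enorm_toReal (by norm_num) (by norm_num)] at h
    simp only [ENNReal.toReal_ofNat] at h
    refine ENNReal.rpow_ne_top_of_nonneg (by norm_num) ?_
    intro h'
    rw [h'] at h
    norm_num at h
  set A := (∫⁻ y, ‖V y‖ₑ ^ (6:ℝ)) ^ (1/3:ℝ) with hAdef
  refine ⟨3 * (A.toReal + 1), by positivity, fun u hu hu2 hdu hn => ?_⟩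
  refine Filter.Eventually.of_forall fun x => ?_
  refine (conv_bound V hV2.1.aemeasurable u hu hu2 hdu hn x).trans ?_
  have hd0 : 0 ≤ ∫ x, ‖fderiv ℝ u x‖ ^ 2 := integral_nonneg fun x => by positivity
  have h4 : 1 ≤ H1norm u := by rw [H1norm, H1sq, hn, Real.one_le_sqrt]; linarith
  have h5 : H1norm u ≤ H1norm u ^ (3/2:ℝ) := Real.self_le_rpow_of_one_le h4 (by norm_num)
  rw [← hAdef, ← ENNReal.ofReal_toReal hA, ← ENNReal.ofReal_mul (by positivity)]
  apply ENNReal.ofReal_le_ofReal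
  have h6 : 0 ≤ A.toReal := by positivity
  calc A.toReal * (3 * H1norm u) ≤ (A.toReal + 1) * (3 * H1norm u ^ (3/2:ℝ)) := by
        gcongr; linarith
    _ = _ := by rw [ENNReal.ofReal_toReal hA]; ring

end
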